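/- Let T be a locally simple complete CLO theory such that IT(T) is finite. Then T is ℵ₀-categorical, and any two models of T (of any cardinality) are back-and-forth equivalent. -/

import Mathlib

open FirstOrder Language Set

/-- Relation symbols of the language `L_κ` of colored linear orders:
a binary `<` and a unary color predicate for each `i : ι`. -/
inductive CLORel (ι : Type) : ℕ → Type
  | lt : CLORel ι 2
  | color (i : ι) : CLORel ι 1

/-- The language `L_κ`, where the colors are indexed by `ι`. -/
def CLOLang (ι : Type) : Language :=
  ⟨fun _ => Empty, CLORel ι⟩

/-- Interpretation of the relation symbols on a linear order `M` with colors `c`. -/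
def cloRelMap {ι M : Type} [LinearOrder M] (c : ι → Set M) :
    ∀ {n}, CLORel ι n → (Fin n → M) → Prop
  | _, .lt => fun v => v 0 < v 1
  | _, .color i => fun v => v 0 ∈ c i

/-- The canonical `L_κ`-structure (a colored linear order, CLO) on a linear
order `M` whose colors are given by `c : ι → Set M`. -/
def CLOStr (ι M : Type) [LinearOrder M] (c : ι → Set M) : (CLOLang ι).Structure M where
  funMap := fun f => Empty.elim f
  RelMap := cloRelMap c

/-- Satisfaction of an `L_κ`-formula in the CLO `(M, <, c)`. -/
def Sat {ι : Type} (M : Type) [LinearOrder M] (c : ι → Set M) {α : Type}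
    (φ : (CLOLang ι).Formula α) (v : α → M) : Prop :=
  letI := CLOStr ι M c
  φ.Realize v

/-- The induced colors on a subset of a CLO. -/
def subColor {ι M : Type} (c : ι → Set M) (s : Set M) : ι → Set s :=
  fun i => {x | (x : M) ∈ c i}

/-- Elementary equivalence of CLOs. -/
def CLOEquiv (ι : Type) (M : Type) [LinearOrder M] (cM : ι → Set M)
    (N : Type) [LinearOrder N] (cN : ι → Set N) : Prop :=
  letI := CLOStr ι M cM
  letI := CLOStr ι N cN
  M ≅[CLOLang ι] N

/-- Isomorphism of CLOs (as `L_κ`-structures). -/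
def CLOIso (ι : Type) (M : Type) [LinearOrder M] (cM : ι → Set M)
    (N : Type) [LinearOrder N] (cN : ι → Set N) : Prop :=
  letI := CLOStr ι M cM
  letI := CLOStr ι N cN
  Nonempty (M ≃[CLOLang ι] N)

/-- The complete theory of a CLO. -/
def CLOTheory (ι : Type) (M : Type) [LinearOrder M] (c : ι → Set M) : (CLOLang ι).Theory :=
  letI := CLOStr ι M c
  (CLOLang ι).completeTheory M

/-- The induced colors on a lexicographic sum `Σₗ i, A i` of CLOs. -/
def sigmaColor {ι I : Type} {A : I → Type} (c : ∀ i, ι → Set (A i)) :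
    ι → Set (Σₗ i, A i) :=
  fun k => {x | (ofLex x).2 ∈ c (ofLex x).1 k}

/-- The induced colors on a two-term lexicographic sum `α ⊕ₗ β` of CLOs. -/
def sumColor2 {ι α β : Type} (ca : ι → Set α) (cb : ι → Set β) : ι → Set (α ⊕ₗ β) :=
  fun k => {x | Sum.elim (· ∈ ca k) (· ∈ cb k) (ofLex x)}

/-- The set defined by a parameter-free formula in one variable in a CLO. -/
def FmlSet (ι : Type) (M : Type) [LinearOrder M] (c : ι → Set M)
    (φ : (CLOLang ι).Formula Unit) : Set M :=
  {x | Sat M c φ fun _ => x}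

/-- A CLO is self-additive if it has more than one point and its only
convex parameter-free-definable subsets are `∅` and the whole order. -/
def SelfAdditive (ι : Type) (M : Type) [LinearOrder M] (c : ι → Set M) : Prop :=
  Nontrivial M ∧
    ∀ φ : (CLOLang ι).Formula Unit, (FmlSet ι M c φ).OrdConnected →
      FmlSet ι M c φ = ∅ ∨ FmlSet ι M c φ = Set.univ

/-- `a ∼ b`: some set definable with parameter `a` is convex, bounded above and
below, and contains both `a` and `b`. -/
def SimRel (ι : Type) {M : Type} [LinearOrder M] (c : ι → Set M) (a b : M) : Prop :=
  ∃ φ : (CLOLang ι).Formula (Unit ⊕ Unit),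
    (Set.OrdConnected {x | Sat M c φ (Sum.elim (fun _ => x) fun _ => a)}) ∧
    (∃ u : M, ∀ z ∈ {x | Sat M c φ (Sum.elim (fun _ => x) fun _ => a)}, z < u) ∧
    (∃ l : M, ∀ z ∈ {x | Sat M c φ (Sum.elim (fun _ => x) fun _ => a)}, l < z) ∧
    a ∈ {x | Sat M c φ (Sum.elim (fun _ => x) fun _ => a)} ∧
    b ∈ {x | Sat M c φ (Sum.elim (fun _ => x) fun _ => a)}

/-- `f : M → N` is an elementary map of CLOs. -/
def IsElemMap (ι : Type) {M N : Type} [LinearOrder M] [LinearOrder N]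
    (cM : ι → Set M) (cN : ι → Set N) (f : M → N) : Prop :=
  ∀ (k : ℕ) (φ : (CLOLang ι).Formula (Fin k)) (v : Fin k → M),
    Sat M cM φ v ↔ Sat N cN φ (f ∘ v)

/-- A subset of a CLO, with its induced structure, is an elementary substructure. -/
def IsElemSubset (ι : Type) (B : Type) [LinearOrder B] (cB : ι → Set B) (s : Set B) : Prop :=
  IsElemMap ι (subColor cB s) cB (Subtype.val : s → B)

/-- A complete `L_κ`-theory is ℵ₀-categorical: any two at-most-countable CLO
models of it are isomorphic.  (Finite and empty models are allowed.) -/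
def Aleph0CatTheory (ι : Type) (T : (CLOLang ι).Theory) : Prop :=
  ∀ (N₁ N₂ : Type) (i₁ : LinearOrder N₁) (i₂ : LinearOrder N₂)
    (c₁ : ι → Set N₁) (c₂ : ι → Set N₂),
    Countable N₁ → Countable N₂ →
    (letI := i₁; CLOTheory ι N₁ c₁) = T → (letI := i₂; CLOTheory ι N₂ c₂) = T →
    (letI := i₁; letI := i₂; CLOIso ι N₁ c₁ N₂ c₂)

/-- `φ` is a convex formula for the complete theory of the CLO `(M₀, c₀)`:
its realizations in every model of that theory form a convex set. -/
def ConvexFml (ι : Type) (M₀ : Type) [LinearOrder M₀] (c₀ : ι → Set M₀)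
    (φ : (CLOLang ι).Formula Unit) : Prop :=
  ∀ (B : Type) (iB : LinearOrder B) (cB : ι → Set B),
    (letI := iB; CLOEquiv ι B cB M₀ c₀) → (letI := iB; Set.OrdConnected (FmlSet ι B cB φ))

/-- The set of common realizations of a set of one-variable formulas in a CLO. -/
def TypeSet (ι : Type) (M : Type) [LinearOrder M] (c : ι → Set M)
    (Φ : Set ((CLOLang ι).Formula Unit)) : Set M :=
  {x | ∀ φ ∈ Φ, Sat M c φ fun _ => x}

/-- A set of one-variable formulas is consistent with the complete theory of
`(M₀, c₀)`: it is realized in some model of that theory. -/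
def TypeConsistent (ι : Type) (M₀ : Type) [LinearOrder M₀] (c₀ : ι → Set M₀)
    (Φ : Set ((CLOLang ι).Formula Unit)) : Prop :=
  ∃ (B : Type) (iB : LinearOrder B) (cB : ι → Set B),
    (letI := iB; CLOEquiv ι B cB M₀ c₀) ∧ (letI := iB; ∃ b : B, b ∈ TypeSet ι B cB Φ)

/-- `Φ` is a convex type of the complete theory of `(M₀, c₀)`: a maximal
consistent set of convex formulas over `∅`.  `IT(T)` is the set of all such. -/
def IsConvexType (ι : Type) (M₀ : Type) [LinearOrder M₀] (c₀ : ι → Set M₀)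
    (Φ : Set ((CLOLang ι).Formula Unit)) : Prop :=
  (∀ φ ∈ Φ, ConvexFml ι M₀ c₀ φ) ∧ TypeConsistent ι M₀ c₀ Φ ∧
    ∀ ψ, ConvexFml ι M₀ c₀ ψ → TypeConsistent ι M₀ c₀ (insert ψ Φ) → ψ ∈ Φ

/-- A convex type is isolated if it contains a convex formula contained in no
other convex type. -/
def IsolatedCT (ι : Type) (M₀ : Type) [LinearOrder M₀] (c₀ : ι → Set M₀)
    (Φ : Set ((CLOLang ι).Formula Unit)) : Prop :=
  ∃ φ ∈ Φ, ConvexFml ι M₀ c₀ φ ∧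
    ∀ Ψ, IsConvexType ι M₀ c₀ Ψ → φ ∈ Ψ → Ψ = Φ

/-- A CLO is ℵ₀-saturated: every finitely-satisfiable set of formulas in one
variable over finitely many parameters is realized. -/
def Aleph0Saturated (ι : Type) (S : Type) [LinearOrder S] (cS : ι → Set S) : Prop :=
  ∀ (m : ℕ) (a : Fin m → S) (p : Set ((CLOLang ι).Formula (Unit ⊕ Fin m))),
    (∀ q : Finset ((CLOLang ι).Formula (Unit ⊕ Fin m)), ↑q ⊆ p →
      ∃ x : S, ∀ φ ∈ q, Sat S cS φ (Sum.elim (fun _ => x) a)) →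
    ∃ x : S, ∀ φ ∈ p, Sat S cS φ (Sum.elim (fun _ => x) a)

/-- A CLO is strongly ℵ₀-homogeneous: finite tuples with the same complete type
are conjugate under an automorphism. -/
def StronglyAleph0Homogeneous (ι : Type) (S : Type) [LinearOrder S] (cS : ι → Set S) : Prop :=
  ∀ (m : ℕ) (a b : Fin m → S),
    (∀ φ : (CLOLang ι).Formula (Fin m), Sat S cS φ a ↔ Sat S cS φ b) →
    ∃ g : S ≃ S, (∀ x y : S, x < y ↔ g x < g y) ∧
      (∀ (k : ι) (x : S), x ∈ cS k ↔ g x ∈ cS k) ∧ ∀ i, g (a i) = b i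

/-- Sufficiently saturated: ℵ₀-saturated and strongly ℵ₀-homogeneous. -/
def SuffSaturated (ι : Type) (S : Type) [LinearOrder S] (cS : ι → Set S) : Prop :=
  Aleph0Saturated ι S cS ∧ StronglyAleph0Homogeneous ι S cS

/-- The complete theory of `(M₀, c₀)` is locally simple: for every sufficiently
saturated model `S` and every convex type `Φ`, the theory `T_Φ = Th(Φ(S))` is
ℵ₀-categorical. -/
def LocallySimple (ι : Type) (M₀ : Type) [LinearOrder M₀] (c₀ : ι → Set M₀) : Prop :=
  ∀ (S : Type) [LinearOrder S], ∀ (cS : ι → Set S),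
    CLOEquiv ι S cS M₀ c₀ → SuffSaturated ι S cS →
    ∀ Φ, IsConvexType ι M₀ c₀ Φ →
      Aleph0CatTheory ι
        (CLOTheory ι (TypeSet ι S cS Φ) (subColor cS (TypeSet ι S cS Φ)))

/-- A finite set of pairs is a partial isomorphism of CLOs: it preserves `<`,
equality, and each color, in both directions. -/
def IsPartialIso (ι : Type) {M N : Type} [LinearOrder M] [LinearOrder N]
    (cM : ι → Set M) (cN : ι → Set N) (f : Finset (M × N)) : Prop :=
  ∀ p ∈ f, ∀ q ∈ f,
    (p.1 < q.1 ↔ p.2 < q.2) ∧ (p.1 = q.1 ↔ p.2 = q.2) ∧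
    ∀ k, p.1 ∈ cM k ↔ p.2 ∈ cN k

/-- Back-and-forth equivalence of CLOs: a nonempty family of finite partial
isomorphisms with the back-and-forth extension properties. -/
def BackForthEquiv (ι : Type) (M : Type) [LinearOrder M] (cM : ι → Set M)
    (N : Type) [LinearOrder N] (cN : ι → Set N) : Prop :=
  ∃ F : Set (Finset (M × N)), F.Nonempty ∧ (∀ f ∈ F, IsPartialIso ι cM cN f) ∧
    (∀ f ∈ F, ∀ m : M, ∃ g ∈ F, f ⊆ g ∧ ∃ n : N, (m, n) ∈ g) ∧
    (∀ f ∈ F, ∀ n : N, ∃ g ∈ F, f ⊆ g ∧ ∃ m : M, (m, n) ∈ g)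

/-- The set of complete theories `Th(Φ(A))` as `A` ranges over models of the
complete theory of `(M₀, c₀)` (including the theory of the empty structure,
in case `Φ` is omitted). -/
def TheoriesAt (ι : Type) (M₀ : Type) [LinearOrder M₀] (c₀ : ι → Set M₀)
    (Φ : Set ((CLOLang ι).Formula Unit)) : Set ((CLOLang ι).Theory) :=
  {T | ∃ (A : Type) (iA : LinearOrder A) (cA : ι → Set A),
    (letI := iA; CLOEquiv ι A cA M₀ c₀) ∧
    T = (letI := iA; CLOTheory ι (TypeSet ι A cA Φ) (subColor cA (TypeSet ι A cA Φ)))}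

/-!
Each of finitely many convex types `Φ` is isolated by a formula `δ`, so that `Φ(A)` is the set
`δ(A)` in every model `A`. Relativizing quantifiers to `δ` shows that the theory of `Φ(A)` depends
only on `T`, hence is the `T_Φ` that is read off in a sufficiently saturated model (such a model is
the union of an `ω`-chain of ultrapowers). Elements of distinct convex types are ordered according
to their types, so the isomorphisms `Φ(A) ≃ Φ(B)` that `ℵ₀`-categoricity of the `T_Φ` provides for
countable models glue to an isomorphism `A ≃ B`.

For models `A`, `B` of any cardinality, almost every countable `C ⊆ A ⊔ B`, in the sense of the club
filter, consists of countable elementary substructures of `A` and `B`, and these are isomorphic. The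
finite maps that extend to such an isomorphism for stationarily many `C` form a back-and-forth
system: given `a ∈ A`, almost every `C` contains `a`, and by Fodor's lemma stationarily many of the
isomorphisms send it to the same `b ∈ B`.
-/

universe u v w w'

section ElementaryRelations

variable {L : FirstOrder.Language.{u, v}} {M : Type w} {N : Type w'} [L.Structure M]
  [L.Structure N] {X Y : Type*}

theorem exists_realize_sumElim [Nonempty N] {a : X → M} {b : X → N}
    (hab : ∀ χ : L.Formula X, χ.Realize a → χ.Realize b) {ψ : L.Formula (X ⊕ Y)} {c : Y → M}
    (h : ψ.Realize (Sum.elim a c)) : ∃ d : Y → N, ψ.Realize (Sum.elim b d) := by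
  classical
  let f : ψ.freeVarFinset → X ⊕ ψ.freeVarFinset := fun z => z.1.elim Sum.inl fun _ => Sum.inr z
  let ψ' : L.Formula (X ⊕ ψ.freeVarFinset) := BoundedFormula.restrictFreeVar ψ f
  have hψ' : (ψ'.iExs _).Realize a := by
    refine Formula.realize_iExs.2 ⟨fun z => Sum.elim a c z, ?_⟩
    refine (BoundedFormula.realize_restrictFreeVar (Sum.elim a c) ?_).2 h
    rintro ⟨x | y, hz⟩ <;> rfl
  obtain ⟨d, hd⟩ := Formula.realize_iExs.1 (hab _ hψ')
  refine ⟨fun y => if hy : Sum.inr y ∈ ψ.freeVarFinset then d ⟨_, hy⟩ else Classical.arbitrary N,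
    (BoundedFormula.realize_restrictFreeVar (f := f) _ ?_).1 hd⟩
  rintro ⟨x | y, hz⟩
  · rfl
  · simp [f, hz]

theorem exists_forall_realize_sumElim [Nonempty N] {a : X → M} {b : X → N}
    (hab : ∀ χ : L.Formula X, χ.Realize a → χ.Realize b) {q : Finset (L.Formula (X ⊕ Y))}
    (h : ∃ c : Y → M, ∀ ψ ∈ q, ψ.Realize (Sum.elim a c)) :
    ∃ d : Y → N, ∀ ψ ∈ q, ψ.Realize (Sum.elim b d) := by
  obtain ⟨c, hc⟩ := h
  simpa using exists_realize_sumElim hab (ψ := Formula.iInf fun ψ : q => ψ.1) (c := c)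
    (by simpa using hc)

variable (L) in
/-- `R` is an elementary relation between `M` and `N`: a tuple of `M` and a tuple of `N` that
correspond under `R` satisfy the same formulas. As equality is preserved, `R` is the graph of a
partial elementary map. -/
def IsElementaryRel (R : Set (M × N)) : Prop :=
  ∀ ⦃n : ℕ⦄ (χ : L.Formula (Fin n)) (x : Fin n → R),
    χ.Realize (fun i => (x i).1.1) ↔ χ.Realize (fun i => (x i).1.2)

namespace IsElementaryRel

variable {R : Set (M × N)}

theorem realize_iff (h : IsElementaryRel L R) {a : X → M} {b : X → N}
    (hab : ∀ x, (a x, b x) ∈ R) (χ : L.Formula X) : χ.Realize a ↔ χ.Realize b := by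
  classical
  let e := χ.freeVarFinset.equivFin
  have key := h (BoundedFormula.restrictFreeVar χ e) fun i => ⟨_, hab (e.symm i)⟩
  rwa [Formula.Realize, Formula.Realize, BoundedFormula.realize_restrictFreeVar a (by simp),
    BoundedFormula.realize_restrictFreeVar b (by simp)] at key

theorem range_of_forall_imp {a : X → M} {b : X → N}
    (hab : ∀ χ : L.Formula X, χ.Realize a → χ.Realize b) :
    IsElementaryRel L (range fun x => (a x, b x)) := by
  intro n χ x
  choose s hs using fun i => (x i).2
  have key := hab (χ.relabel s)
  have keyNot := hab (χ.relabel s).not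
  simp only [Formula.realize_not, Formula.realize_relabel, Function.comp_def] at key keyNot
  simp only [← hs]
  exact ⟨key, not_imp_not.1 keyNot⟩

theorem swap (h : IsElementaryRel L R) : IsElementaryRel L (Prod.swap ⁻¹' R) :=
  fun _ χ x => (h χ fun i => ⟨_, (x i).2⟩).symm

theorem iUnion_of_monotone {R : ℕ → Set (M × N)} (hmono : Monotone R)
    (h : ∀ n, IsElementaryRel L (R n)) : IsElementaryRel L (⋃ n, R n) := by
  intro n χ x
  choose k hk using fun i => mem_iUnion.1 (x i).2
  exact (h (Finset.univ.sup k)).realize_iff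
    (fun i => hmono (Finset.le_sup (Finset.mem_univ i)) (hk i)) χ

theorem exists_equiv (h : IsElementaryRel L R) (hleft : ∀ x, ∃ y, (x, y) ∈ R)
    (hright : ∀ y, ∃ x, (x, y) ∈ R) : ∃ g : M ≃[L] N, ∀ x y, (x, y) ∈ R → g x = y := by
  have eq_iff {x x' y y'} (hx : (x, y) ∈ R) (hx' : (x', y') ∈ R) : x = x' ↔ y = y' := by
    simpa using h.realize_iff (a := ![x, x']) (b := ![y, y'])
      (Fin.forall_fin_two.2 ⟨hx, hx'⟩) ((var 0).equal (var 1))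
  choose g hg using hleft
  choose g' hg' using hright
  refine ⟨⟨⟨g, g', fun x => (eq_iff (hg' _) (hg x)).2 rfl, fun y => (eq_iff (hg _) (hg' y)).1 rfl⟩,
    fun F x => ?_, fun r x => ?_⟩, fun x y hxy => (eq_iff (hg x) hxy).1 rfl⟩
  · simpa [Function.comp_def, eq_comm] using
      h.realize_iff (a := Sum.elim x fun _ => Structure.funMap F x)
        (b := Sum.elim (g ∘ x) fun _ => g (Structure.funMap F x))
        (Sum.rec (fun i => hg _) fun _ => hg _)
        ((Term.func F fun i => var (Sum.inl i)).equal (var (Sum.inr ())))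
  · simpa [Formula.realize_rel, Function.comp_def] using
      (h.realize_iff (fun i => hg (x i)) (r.formula fun i => var i)).symm

end IsElementaryRel

end ElementaryRelations

section SaturatedModels

variable {L : FirstOrder.Language.{u, v}} {S : Type w} [L.Structure S] {X Y Z : Type*}

variable (L) in
/-- Every set of formulas with parameters `a`, in as many variables as there are parameters, that is
finitely satisfiable in `S` is realized by a tuple of elements of `B`. -/
def RealizesTypesOver (a : X → S) (B : Set S) : Prop :=
  ∀ p : Set (L.Formula (X ⊕ X)),
    (∀ q : Finset (L.Formula (X ⊕ X)), ↑q ⊆ p → ∃ x : X → S, ∀ φ ∈ q, φ.Realize (Sum.elim a x)) →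
    ∃ x : X → S, (∀ i, x i ∈ B) ∧ ∀ φ ∈ p, φ.Realize (Sum.elim a x)

namespace RealizesTypesOver

variable {a : X → S} {B : Set S}

theorem map {N : Type w'} [L.Structure N] (h : RealizesTypesOver L a B) (g : S ↪ₑ[L] N)
    [Nonempty S] : RealizesTypesOver L (g ∘ a) (g '' B) := by
  intro p hp
  obtain ⟨x, hxB, hx⟩ := h p fun q hq =>
    exists_forall_realize_sumElim (fun χ => (g.map_formula χ a).1) (hp q hq)
  refine ⟨g ∘ x, fun i => mem_image_of_mem g (hxB i), fun φ hφ => ?_⟩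
  rw [← Sum.comp_elim, g.map_formula]
  exact hx φ hφ

theorem exists_realize [Nonempty S] (h : RealizesTypesOver L a B) {f : Y → X}
    (hf : Function.Injective f) (c : Z → X) (p : Set (L.Formula (Z ⊕ Y)))
    (hp : ∀ q : Finset (L.Formula (Z ⊕ Y)), ↑q ⊆ p →
      ∃ y : Y → S, ∀ φ ∈ q, φ.Realize (Sum.elim (a ∘ c) y)) :
    ∃ y : Y → S, (∀ i, y i ∈ B) ∧ ∀ φ ∈ p, φ.Realize (Sum.elim (a ∘ c) y) := by
  classical
  have realize_relabel (φ : L.Formula (Z ⊕ Y)) (x : X → S) :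
      (φ.relabel (Sum.map c f)).Realize (Sum.elim a x) ↔ φ.Realize (Sum.elim (a ∘ c) (x ∘ f)) := by
    rw [Formula.realize_relabel, Sum.elim_comp_map]
  obtain ⟨x, hxB, hx⟩ := h (Formula.relabel (Sum.map c f) '' p) fun q hq => by
    obtain ⟨q, hqp, rfl⟩ := Finset.subset_set_image_iff.1 hq
    obtain ⟨y, hy⟩ := hp q hqp
    refine ⟨Function.extend f y fun _ => Classical.arbitrary S, ?_⟩
    simpa [realize_relabel, Function.extend_comp hf] using hy
  exact ⟨x ∘ f, fun i => hxB _, fun φ hφ => (realize_relabel φ x).1 (hx _ (mem_image_of_mem _ hφ))⟩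

theorem subtype_val [Nonempty S] (h : RealizesTypesOver L a B) :
    RealizesTypesOver L ((↑) : range a → S) B := by
  let f : range a → X := fun y => y.2.choose
  have hf : a ∘ f = ((↑) : range a → S) := funext fun y => y.2.choose_spec
  have := h.exists_realize (Function.Injective.of_comp (hf ▸ Subtype.val_injective)) f
  rwa [hf] at this

end RealizesTypesOver

/-- An ultrafilter of finite subsets of `α` that, for each element of `α`, is concentrated on the
finite sets containing it. -/
noncomputable abbrev finsetUltrafilter (α : Type*) : Ultrafilter (Finset α) :=
  Ultrafilter.of Filter.atTop

variable (L) in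
/-- An ultrapower of `M` realizing all types over `M` in as many variables as `M` has elements; it
is indexed by the finite sets of formulas with parameters in `M`. -/
abbrev SaturatingPower (M : Type u) [L.Structure M] : Type _ :=
  (finsetUltrafilter (L.Formula (M ⊕ M)) : Filter (Finset (L.Formula (M ⊕ M)))).Product fun _ => M

/-- The diagonal embedding of `M` in its saturating ultrapower. -/
noncomputable def SaturatingPower.diag (M : Type u) [L.Structure M] [Nonempty M] :
    M ↪ₑ[L] SaturatingPower L M where
  toFun m := ((fun _ => m : Finset (L.Formula (M ⊕ M)) → M) : SaturatingPower L M)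
  map_formula' _ φ x :=
    (Ultraproduct.realize_formula_cast φ fun i _ => x i).trans Filter.eventually_const

theorem SaturatingPower.realizesTypesOver_diag (M : Type u) [L.Structure M] [Nonempty M] :
    RealizesTypesOver L (SaturatingPower.diag (L := L) M) univ := by
  classical
  intro p hp
  have hsat (q : Finset (L.Formula (M ⊕ M))) :
      ∃ x : M → M, ∀ φ ∈ q.filter (· ∈ p), φ.Realize (Sum.elim id x) :=
    exists_forall_realize_sumElim (fun χ => ((diag M).map_formula χ id).1)
      (hp _ fun φ hφ => (Finset.mem_filter.1 hφ).2)
  choose x hx using hsat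
  refine ⟨fun m => ((fun q => x q m : Finset (L.Formula (M ⊕ M)) → M) : SaturatingPower L M),
    fun _ => mem_univ _, fun φ hφ => ?_⟩
  have key := (Ultraproduct.realize_formula_cast (u := finsetUltrafilter (L.Formula (M ⊕ M))) φ
      (Sum.elim (fun m _ => m) fun m q => x q m : M ⊕ M → Finset (L.Formula (M ⊕ M)) → M)).2 <| by
    filter_upwards [Ultrafilter.of_le _ (Filter.mem_atTop ({φ} : Finset (L.Formula (M ⊕ M))))]
      with q hq
    convert hx q φ (Finset.mem_filter.2 ⟨hq (Finset.mem_singleton_self φ), hφ⟩) using 1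
    ext (m | m) <;> rfl
  refine (iff_of_eq (congrArg φ.Realize (funext ?_))).2 key
  rintro (m | m) <;> rfl

section DirectLimit

variable {I : Type w'} [Preorder I] [IsDirectedOrder I] [Nonempty I] {G : I → Type w}
  [∀ i, L.Structure (G i)] {f : ∀ i j, i ≤ j → G i ↪[L] G j} [DirectedSystem G fun i j h => f i j h]

theorem realize_directLimit_of (hf : ∀ i j h, ∃ g : G i ↪ₑ[L] G j, ⇑g = f i j h) {n : ℕ}
    (φ : L.BoundedFormula X n) (i : I) (v : X → G i) (xs : Fin n → G i) :
    φ.Realize (DirectLimit.of L I G f i ∘ v) (DirectLimit.of L I G f i ∘ xs) ↔ φ.Realize v xs := by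
  induction φ generalizing i with
  | falsum => rfl
  | equal =>
    simp only [BoundedFormula.Realize, ← Sum.comp_elim, HomClass.realize_term]
    exact (DirectLimit.of L I G f i).injective.eq_iff
  | rel R ts =>
    simp only [BoundedFormula.Realize, ← Sum.comp_elim, HomClass.realize_term]
    exact (DirectLimit.of L I G f i).map_rel R _
  | imp _ _ ih₁ ih₂ => simp only [BoundedFormula.Realize, ih₁, ih₂]
  | all φ ih =>
    simp only [BoundedFormula.realize_all]
    refine ⟨fun h a => ?_, fun h a => ?_⟩
    · rw [← ih, Fin.comp_snoc]
      exact h _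
    · obtain ⟨k, y, rfl⟩ := DirectLimit.exists_of a
      obtain ⟨j, hij, hkj⟩ := exists_ge_ge i k
      obtain ⟨g, hg⟩ := hf i j hij
      have of_eq_comp : ⇑(DirectLimit.of L I G f i) = DirectLimit.of L I G f j ∘ g :=
        funext fun b => hg ▸ DirectLimit.of_f.symm
      rw [← DirectLimit.of_f (hij := hkj), of_eq_comp, Function.comp_assoc, Function.comp_assoc,
        ← Fin.comp_snoc, ih]
      exact (g.map_boundedFormula φ.all v xs).2 h _

end DirectLimit

theorem exists_elementary_limit {G : ℕ → Type w} [∀ n, L.Structure (G n)]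
    (j : ∀ n, G n ↪ₑ[L] G (n + 1)) :
    ∃ (S : Type w) (_ : L.Structure S) (e : ∀ n, G n ↪ₑ[L] S),
      (∀ n x, e (n + 1) (j n x) = e n x) ∧ ∀ y, ∃ n, y ∈ range (e n) := by
  let f : ∀ m n, m ≤ n → G m ↪[L] G n := DirectedSystem.natLERec fun n => (j n).toEmbedding
  have hf m n (h : m ≤ n) : ∃ g : G m ↪ₑ[L] G n, ⇑g = f m n h := by
    induction n, h using Nat.le_induction with
    | base => exact ⟨.refl L _, funext fun x => (DirectedSystem.map_self (f := (f · · ·)) x).symm⟩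
    | succ n h ih =>
      obtain ⟨g, hg⟩ := ih
      refine ⟨(j n).comp g, funext fun x => ?_⟩
      simp [f, Nat.leRecOn_succ h, hg]
  let e (n : ℕ) : G n ↪ₑ[L] Language.DirectLimit G f :=
    { toFun := DirectLimit.of L ℕ G f n
      map_formula' := fun _ φ x => by
        rw [Formula.Realize, Formula.Realize, ← realize_directLimit_of hf φ n x default,
          Subsingleton.elim (_ ∘ default) default] }
  refine ⟨_, inferInstance, e, fun n x => ?_, DirectLimit.exists_of⟩
  have f_succ : f n (n + 1) n.le_succ x = j n x := by simp [f, Nat.leRecOn_succ']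
  exact f_succ ▸ DirectLimit.of_f (G := G) (f := f) (hij := n.le_succ) (x := x)

variable (L) in
/-- `S` is the union of the increasing sequence `E`, and types over `E n` are realized in
`E (n + 1)`. -/
structure IsSaturatingChain (E : ℕ → Set S) : Prop where
  monotone : Monotone E
  exists_mem : ∀ x, ∃ n, x ∈ E n
  realizesTypesOver : ∀ n, RealizesTypesOver L ((↑) : E n → S) (E (n + 1))

namespace IsSaturatingChain

variable {E : ℕ → Set S}

theorem exists_forall_mem [Finite X] (h : IsSaturatingChain L E) (a : X → S) :
    ∃ n, ∀ x, a x ∈ E n := by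
  have := Fintype.ofFinite X
  choose k hk using fun x => h.exists_mem (a x)
  exact ⟨Finset.univ.sup k, fun x => h.monotone (Finset.le_sup (Finset.mem_univ x)) (hk x)⟩

theorem exists_forall_realize [Nonempty S] [Finite Z] (h : IsSaturatingChain L E) (a : Z → S)
    (p : Set (L.Formula (Z ⊕ Unit)))
    (hp : ∀ q : Finset (L.Formula (Z ⊕ Unit)), ↑q ⊆ p →
      ∃ y, ∀ φ ∈ q, φ.Realize (Sum.elim a y)) :
    ∃ y, ∀ φ ∈ p, φ.Realize (Sum.elim a y) := by
  obtain ⟨n, hn⟩ := h.exists_forall_mem fun z : Option Z => z.elim (Classical.arbitrary S) a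
  obtain ⟨y, -, hy⟩ := (h.realizesTypesOver n).exists_realize
    (f := fun _ : Unit => ⟨_, hn none⟩) (Function.injective_of_subsingleton _)
    (fun z => ⟨a z, hn (some z)⟩) p hp
  exact ⟨y, hy⟩

variable {R : Set (S × S)}

theorem exists_isElementaryRel_left [Nonempty S] (h : IsSaturatingChain L E)
    (hR : IsElementaryRel L R) {n : ℕ} (hn : R ⊆ E n ×ˢ E n) :
    ∃ R', IsElementaryRel L R' ∧ R ⊆ R' ∧ R' ⊆ E (n + 1) ×ˢ E (n + 1) ∧
      ∀ x ∈ E n, ∃ y, (x, y) ∈ R' := by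
  let a : R ⊕ E n → S := Sum.elim (fun r => r.1.1) (↑)
  obtain ⟨y, hyE, hy⟩ := (h.realizesTypesOver n).exists_realize Function.injective_id
    (fun r : R => ⟨r.1.2, (hn r.2).2⟩) {φ | φ.Realize a} fun q hq =>
      exists_forall_realize_sumElim (fun χ => (hR.realize_iff (fun r => r.2) χ).1) ⟨(↑), hq⟩
  refine ⟨_, .range_of_forall_imp hy, fun r hr => ⟨Sum.inl ⟨r, hr⟩, rfl⟩, ?_,
    fun x hx => ⟨_, Sum.inr ⟨x, hx⟩, rfl⟩⟩
  have hmono : E n ⊆ E (n + 1) := h.monotone n.le_succ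
  rintro _ ⟨r | x, rfl⟩
  · exact ⟨hmono (hn r.2).1, hmono (hn r.2).2⟩
  · exact ⟨hmono x.2, hyE x⟩

theorem exists_isElementaryRel [Nonempty S] (h : IsSaturatingChain L E)
    (hR : IsElementaryRel L R) (hbdd : ∃ n, R ⊆ E n ×ˢ E n) (k : ℕ) :
    ∃ R', (IsElementaryRel L R' ∧ ∃ n, R' ⊆ E n ×ˢ E n) ∧ R ⊆ R' ∧
      ∀ x ∈ E k, (∃ y, (x, y) ∈ R') ∧ ∃ y, (y, x) ∈ R' := by
  obtain ⟨n, hn⟩ := hbdd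
  have hmono := h.monotone
  obtain ⟨R₁, hR₁, hRR₁, hn₁, hleft⟩ := h.exists_isElementaryRel_left hR (n := max n k)
    (hn.trans (prod_mono (hmono (le_max_left n k)) (hmono (le_max_left n k))))
  obtain ⟨R₂, hR₂, hRR₂, hn₂, hright⟩ :=
    h.exists_isElementaryRel_left hR₁.swap fun r hr => (hn₁ hr).symm
  refine ⟨Prod.swap ⁻¹' R₂, ⟨hR₂.swap, _, fun r hr => (hn₂ hr).symm⟩, fun r hr => hRR₂ (hRR₁ hr),
    fun x hx => ⟨?_, hright x (hmono (by omega) hx)⟩⟩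
  obtain ⟨y, hy⟩ := hleft x (hmono (le_max_right n k) hx)
  exact ⟨y, hRR₂ hy⟩

theorem exists_equiv [Nonempty S] [Finite X] (h : IsSaturatingChain L E) {a b : X → S}
    (hab : ∀ χ : L.Formula X, χ.Realize a → χ.Realize b) :
    ∃ g : S ≃[L] S, ∀ x, g (a x) = b x := by
  have hbdd : ∃ n, (range fun x => (a x, b x)) ⊆ E n ×ˢ E n := by
    obtain ⟨n, hn⟩ := h.exists_forall_mem (Sum.elim a b)
    exact ⟨n, range_subset_iff.2 fun x => ⟨hn (Sum.inl x), hn (Sum.inr x)⟩⟩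
  choose next hnext using fun (k : ℕ) (R : {R // IsElementaryRel L R ∧ ∃ n, R ⊆ E n ×ˢ E n}) =>
    h.exists_isElementaryRel R.2.1 R.2.2 k
  let R : ℕ → {R // IsElementaryRel L R ∧ ∃ n, R ⊆ E n ×ˢ E n} :=
    Nat.rec ⟨_, .range_of_forall_imp hab, hbdd⟩ fun k R => ⟨next k R, (hnext k R).1⟩
  have hmono : Monotone fun k => (R k).1 := monotone_nat_of_le_succ fun k => (hnext k (R k)).2.1
  have htotal (x : S) : (∃ y, (x, y) ∈ ⋃ k, (R k).1) ∧ ∃ y, (y, x) ∈ ⋃ k, (R k).1 := by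
    obtain ⟨k, hk⟩ := h.exists_mem x
    obtain ⟨⟨y, hy⟩, z, hz⟩ := (hnext k (R k)).2.2 x hk
    exact ⟨⟨y, mem_iUnion.2 ⟨k + 1, hy⟩⟩, z, mem_iUnion.2 ⟨k + 1, hz⟩⟩
  obtain ⟨g, hg⟩ := (IsElementaryRel.iUnion_of_monotone hmono fun k => (R k).2.1).exists_equiv
    (fun x => (htotal x).1) fun x => (htotal x).2
  exact ⟨g, fun x => hg _ _ (mem_iUnion.2 ⟨0, x, rfl⟩)⟩

end IsSaturatingChain

end SaturatedModels

/-- The iterated saturating ultrapowers of `M`. -/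
noncomputable def iteratedSaturatingPower (L : FirstOrder.Language.{u, u}) (M : Type u)
    [L.Structure M] [Nonempty M] : ℕ → Theory.ModelType.{u, u, u} (∅ : L.Theory)
  | 0 => .of ∅ M
  | n + 1 => .of ∅ (SaturatingPower L (iteratedSaturatingPower L M n))

theorem exists_isSaturatingChain {L : FirstOrder.Language.{u, u}} (M : Type u) [L.Structure M]
    [Nonempty M] :
    ∃ (S : Type u) (_ : L.Structure S) (_ : Nonempty S) (E : ℕ → Set S),
      (S ≅[L] M) ∧ IsSaturatingChain L E := by
  let G (n : ℕ) := iteratedSaturatingPower L M n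
  let diag (n : ℕ) : G n ↪ₑ[L] G (n + 1) := SaturatingPower.diag (L := L) (G n)
  obtain ⟨S, _, e, he, hS⟩ := exists_elementary_limit diag
  have : Nonempty S := ⟨e 0 (Classical.arbitrary (G 0))⟩
  have e_eq_comp n : ⇑(e n) = e (n + 1) ∘ diag n := funext fun x => (he n x).symm
  refine ⟨S, inferInstance, this, fun n => range (e n), (e 0).elementarilyEquivalent.symm,
    monotone_nat_of_le_succ fun n => ?_, hS, fun n => ?_⟩
  · rw [e_eq_comp]
    exact range_comp_subset_range _ _
  · have : RealizesTypesOver L (e (n + 1) ∘ diag n) (e (n + 1) '' univ) :=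
      (SaturatingPower.realizesTypesOver_diag (G n)).map _
    rw [← e_eq_comp, image_univ] at this
    exact this.subtype_val

section Relativization

variable {L : FirstOrder.Language.{u, v}} {X : Type*}

/-- The relativization of a formula to the set defined by `δ`: its quantifiers range over the
solutions of `δ` only. -/
def relativize (δ : L.Formula Unit) : ∀ {n}, L.BoundedFormula X n → L.BoundedFormula X n
  | _, .falsum => .falsum
  | _, .equal t₁ t₂ => .equal t₁ t₂
  | _, .rel R ts => .rel R ts
  | _, .imp φ ψ => (relativize δ φ).imp (relativize δ ψ)
  | n, .all φ =>
    ((BoundedFormula.relabel (fun _ => Sum.inr (Fin.last n)) δ).imp (relativize δ φ)).all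

variable {M : Type w} {N : Type w'} [L.Structure M] [L.Structure N] {δ : L.Formula Unit}

theorem realize_relativize (f : N ↪[L] M) (hf : range f = {x | δ.Realize fun _ => x}) {n : ℕ}
    (φ : L.BoundedFormula X n) (v : X → N) (xs : Fin n → N) :
    (relativize δ φ).Realize (f ∘ v) (f ∘ xs) ↔ φ.Realize v xs := by
  induction φ with
  | falsum => rfl
  | equal =>
    simp only [relativize, BoundedFormula.Realize, ← Sum.comp_elim, HomClass.realize_term]
    exact f.injective.eq_iff
  | rel R ts =>
    simp only [relativize, BoundedFormula.Realize, ← Sum.comp_elim, HomClass.realize_term]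
    exact f.map_rel R _
  | imp _ _ ih₁ ih₂ => simp only [relativize, BoundedFormula.Realize, ih₁, ih₂]
  | @all n φ ih =>
    have realize_guard (x : M) :
        (BoundedFormula.relabel (fun _ => Sum.inr (Fin.last n)) δ).Realize (f ∘ v)
          (Fin.snoc (f ∘ xs) x : Fin (n + 1) → M) ↔ x ∈ range f := by
      rw [hf, mem_ofPred_eq, Formula.Realize, BoundedFormula.realize_relabel]
      simp [Function.comp_def, Subsingleton.elim _ (default : Fin 0 → M)]
    simp only [relativize, BoundedFormula.realize_all, BoundedFormula.realize_imp]
    refine (forall_congr' fun x => imp_congr_left (realize_guard x)).trans ?_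
    simp only [forall_mem_range, ← Fin.comp_snoc, ih]

theorem realize_relativize_sentence (f : N ↪[L] M) (hf : range f = {x | δ.Realize fun _ => x})
    (φ : L.Sentence) : M ⊨ (relativize δ φ : L.Sentence) ↔ N ⊨ φ := by
  rw [Sentence.Realize, Sentence.Realize, Formula.Realize, Formula.Realize,
    ← realize_relativize f hf, Unique.eq_default (f ∘ _), Unique.eq_default (f ∘ _)]

theorem elementarilyEquivalent_of_range_eq {M' N' : Type*} [L.Structure M'] [L.Structure N']
    (h : M ≅[L] M') {f : N ↪[L] M} (hf : range f = {x | δ.Realize fun _ => x}) {f' : N' ↪[L] M'}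
    (hf' : range f' = {x | δ.Realize fun _ => x}) : N ≅[L] N' :=
  elementarilyEquivalent_iff.2 fun φ => (realize_relativize_sentence f hf φ).symm.trans <|
    (h.realize_sentence _).trans (realize_relativize_sentence f' hf' φ)

end Relativization

theorem isStrictTotalOrder_of_elementarilyEquivalent {L : FirstOrder.Language.{u, v}} {M N : Type w}
    [L.Structure M] [L.Structure N] (h : N ≅[L] M) (r : L.Relations 2)
    [hM : IsStrictTotalOrder M (fun x y => Structure.RelMap r ![x, y])] :
    IsStrictTotalOrder N fun x y => Structure.RelMap r ![x, y] := by
  let trichotomy : L.Sentence := ∀' ∀' (∼(r.boundedFormula₂ (&0) &1) ⟹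
    ∼(r.boundedFormula₂ (&1) &0) ⟹ (&0).bdEqual &1)
  have realize_trichotomy {P : Type w} [L.Structure P] :
      P ⊨ trichotomy ↔ ∀ x y : P, ¬ Structure.RelMap r ![x, y] → ¬ Structure.RelMap r ![y, x] →
        x = y :=
    forall₂_congr fun _ _ => imp_congr (not_congr BoundedFormula.realize_rel₂)
      (imp_congr (not_congr BoundedFormula.realize_rel₂) .rfl)
  have hirrefl := (h.realize_sentence _).2 (Relations.realize_irreflexive.2 hM.toIrrefl)
  have htrans := (h.realize_sentence _).2 (Relations.realize_transitive.2 hM.toIsTrans)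
  have htrichotomy := (h.realize_sentence _).2 (realize_trichotomy.2 hM.trichotomous)
  exact
    { toIrrefl := Relations.realize_irreflexive.1 hirrefl
      toIsTrans := Relations.realize_transitive.1 htrans
      trichotomous := realize_trichotomy.1 htrichotomy }

section ColoredOrders

variable {ι : Type} {M N : Type} [LinearOrder M] [LinearOrder N] {cM : ι → Set M} {cN : ι → Set N}

theorem exists_cloStr_eq {P : Type} {str : (CLOLang ι).Structure P}
    (h : letI := CLOStr ι M cM; P ≅[CLOLang ι] M) :
    ∃ (_ : LinearOrder P) (cP : ι → Set P), CLOStr ι P cP = str := by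
  classical
  let := CLOStr ι M cM
  let ltRel : (CLOLang ι).Relations 2 := CLORel.lt
  have : IsStrictTotalOrder M fun x y => Structure.RelMap ltRel ![x, y] :=
    inferInstanceAs (IsStrictTotalOrder M fun x y => x < y)
  have := isStrictTotalOrder_of_elementarilyEquivalent h ltRel
  refine ⟨linearOrderOfSTO fun x y : P => Structure.RelMap ltRel ![x, y],
    fun k => {x | Structure.RelMap (L := CLOLang ι) (CLORel.color k : CLORel ι 1) ![x]},
    Structure.ext (funext₂ fun _ f => Empty.elim f) (funext₃ fun n R v => ?_)⟩
  cases R with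
  | lt => exact congrArg (str.RelMap (CLORel.lt : CLORel ι 2)) (FinVec.etaExpand_eq v)
  | color k => exact congrArg (str.RelMap (CLORel.color k : CLORel ι 1)) (FinVec.etaExpand_eq v)

theorem cloIso_iff :
    CLOIso ι M cM N cN ↔
      ∃ g : M ≃ N, (∀ x y, x < y ↔ g x < g y) ∧ ∀ k x, x ∈ cM k ↔ g x ∈ cN k := by
  let := CLOStr ι M cM
  let := CLOStr ι N cN
  constructor
  · rintro ⟨g⟩
    exact ⟨g.toEquiv, fun x y => (g.map_rel (CLORel.lt : CLORel ι 2) ![x, y]).symm,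
      fun k x => (g.map_rel (CLORel.color k : CLORel ι 1) ![x]).symm⟩
  · rintro ⟨g, hlt, hcolor⟩
    refine ⟨⟨g, fun f => Empty.elim f, fun R v => ?_⟩⟩
    cases R with
    | lt => exact (hlt _ _).symm
    | color k => exact (hcolor k _).symm

theorem IsSaturatingChain.suffSaturated {S : Type} [LinearOrder S] [Nonempty S] {c : ι → Set S}
    {E : ℕ → Set S} (h : letI := CLOStr ι S c; IsSaturatingChain (CLOLang ι) E) :
    SuffSaturated ι S c := by
  classical
  let := CLOStr ι S c
  refine ⟨fun m a p hp => ?_, fun m a b hab => ?_⟩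
  · have realize_relabel (φ : (CLOLang ι).Formula (Unit ⊕ Fin m)) (y : Unit → S) :
        (φ.relabel Sum.swap).Realize (Sum.elim a y) ↔ Sat S c φ (Sum.elim y a) := by
      rw [Formula.realize_relabel, Sum.elim_swap, Sat]
    obtain ⟨y, hy⟩ := h.exists_forall_realize a (Formula.relabel Sum.swap '' p) fun q hq => by
      obtain ⟨q, hqp, rfl⟩ := Finset.subset_set_image_iff.1 hq
      obtain ⟨x, hx⟩ := hp q hqp
      exact ⟨fun _ => x, by simpa [realize_relabel] using hx⟩
    exact ⟨y (), fun φ hφ => (realize_relabel φ y).1 (hy _ (mem_image_of_mem _ hφ))⟩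
  · obtain ⟨g, hg⟩ := h.exists_equiv fun χ => (hab χ).1
    exact ⟨g.toEquiv, fun x y => (g.map_rel (CLORel.lt : CLORel ι 2) ![x, y]).symm,
      fun k x => (g.map_rel (CLORel.color k : CLORel ι 1) ![x]).symm, hg⟩

theorem exists_suffSaturated (c : ι → Set M) :
    ∃ (S : Type) (_ : LinearOrder S) (cS : ι → Set S),
      CLOEquiv ι S cS M c ∧ SuffSaturated ι S cS := by
  rcases isEmpty_or_nonempty M with hM | hM
  · exact ⟨M, _, c, rfl, fun m a p hp => (hp ∅ (by simp)).elim fun x _ => hM.elim x,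
      fun m a b _ => ⟨Equiv.refl M, by simp, by simp, fun i => hM.elim (a i)⟩⟩
  let := CLOStr ι M c
  obtain ⟨S, _, _, E, hSM, hE⟩ := exists_isSaturatingChain (L := CLOLang ι) M
  obtain ⟨_, cS, rfl⟩ := exists_cloStr_eq hSM
  exact ⟨S, _, cS, hSM, hE.suffSaturated⟩

/-- The inclusion of a set of points of a colored linear order, as an embedding of structures. -/
def subtypeEmbedding (c : ι → Set M) (s : Set M) :
    letI := CLOStr ι M c
    letI := CLOStr ι s (subColor c s)
    s ↪[CLOLang ι] M :=
  letI := CLOStr ι M c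
  letI := CLOStr ι s (subColor c s)
  { toFun := Subtype.val
    inj' := Subtype.val_injective
    map_fun' := fun f => Empty.elim f
    map_rel' := fun R _ => by cases R <;> exact Iff.rfl }

theorem CLOEquiv.fmlSet (h : CLOEquiv ι M cM N cN) (δ : (CLOLang ι).Formula Unit) :
    CLOEquiv ι (FmlSet ι M cM δ) (subColor cM _) (FmlSet ι N cN δ) (subColor cN _) := by
  let := CLOStr ι M cM
  let := CLOStr ι N cN
  let := CLOStr ι _ (subColor cM (FmlSet ι M cM δ))
  let := CLOStr ι _ (subColor cN (FmlSet ι N cN δ))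
  exact elementarilyEquivalent_of_range_eq h (f := subtypeEmbedding cM _)
    (f' := subtypeEmbedding cN _) Subtype.range_val Subtype.range_val

/-- The formula `x_s < x_t`. -/
def ltFml {X : Type} (s t : X) : (CLOLang ι).Formula X :=
  Relations.formula₂ (L := CLOLang ι) (CLORel.lt : CLORel ι 2) (var s) (var t)

theorem sat_ltFml {X : Type} {s t : X} {v : X → M} : Sat M cM (ltFml s t) v ↔ v s < v t :=
  letI := CLOStr ι M cM
  Formula.realize_rel₂

/-- The formula stating that `x` lies below every solution of `ψ`. -/
noncomputable def belowFml (ψ : (CLOLang ι).Formula Unit) : (CLOLang ι).Formula Unit :=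
  ((ψ.relabel Sum.inr).imp (ltFml (Sum.inl ()) (Sum.inr ()))).iAlls Unit

/-- The formula stating that `x` lies above every solution of `ψ`. -/
noncomputable def aboveFml (ψ : (CLOLang ι).Formula Unit) : (CLOLang ι).Formula Unit :=
  ((ψ.relabel Sum.inr).imp (ltFml (Sum.inr ()) (Sum.inl ()))).iAlls Unit

section FmlSet

variable {ψ : (CLOLang ι).Formula Unit} {x : M}

theorem mem_fmlSet_belowFml :
    x ∈ FmlSet ι M cM (belowFml ψ) ↔ ∀ y ∈ FmlSet ι M cM ψ, x < y := by
  let := CLOStr ι M cM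
  refine Formula.realize_iAlls.trans ?_
  simp only [Formula.realize_imp, Formula.realize_relabel]
  exact ⟨fun h y hy => sat_ltFml.1 (h (fun _ => y) hy), fun h i hi => sat_ltFml.2 (h (i ()) hi)⟩

theorem mem_fmlSet_aboveFml :
    x ∈ FmlSet ι M cM (aboveFml ψ) ↔ ∀ y ∈ FmlSet ι M cM ψ, y < x := by
  let := CLOStr ι M cM
  refine Formula.realize_iAlls.trans ?_
  simp only [Formula.realize_imp, Formula.realize_relabel]
  exact ⟨fun h y hy => sat_ltFml.1 (h (fun _ => y) hy), fun h i hi => sat_ltFml.2 (h (i ()) hi)⟩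

theorem mem_fmlSet_iInf {I : Type} [Finite I] {f : I → (CLOLang ι).Formula Unit} :
    x ∈ FmlSet ι M cM (Formula.iInf f) ↔ ∀ i, x ∈ FmlSet ι M cM (f i) :=
  letI := CLOStr ι M cM
  Formula.realize_iInf

end FmlSet

section ConvexTypes

variable {M₀ : Type} [LinearOrder M₀] {c₀ : ι → Set M₀} {Φ : Set ((CLOLang ι).Formula Unit)}
  {ψ : (CLOLang ι).Formula Unit}

theorem convexFml_belowFml : ConvexFml ι M₀ c₀ (belowFml ψ) := by
  refine fun B _ cB _ => ⟨fun x _ y hy z hz => ?_⟩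
  rw [mem_fmlSet_belowFml] at hy ⊢
  exact fun w hw => hz.2.trans_lt (hy w hw)

theorem convexFml_aboveFml : ConvexFml ι M₀ c₀ (aboveFml ψ) := by
  refine fun B _ cB _ => ⟨fun x hx y _ z hz => ?_⟩
  rw [mem_fmlSet_aboveFml] at hx ⊢
  exact fun w hw => (hx w hw).trans_le hz.1

theorem convexFml_iInf {I : Type} [Finite I] {f : I → (CLOLang ι).Formula Unit}
    (hf : ∀ i, ConvexFml ι M₀ c₀ (f i)) : ConvexFml ι M₀ c₀ (Formula.iInf f) := by
  refine fun B _ cB hB => ⟨fun x hx y hy z hz => ?_⟩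
  rw [mem_fmlSet_iInf] at hx hy ⊢
  exact fun i => (hf i B _ cB hB).out (hx i) (hy i) hz

variable {A B : Type} [LinearOrder A] [LinearOrder B] {cA : ι → Set A} {cB : ι → Set B}

theorem ConvexFml.exists_disjoint (hψ : ConvexFml ι M₀ c₀ ψ) (hA : CLOEquiv ι A cA M₀ c₀) {x : A}
    (hx : x ∉ FmlSet ι A cA ψ) :
    ∃ χ, ConvexFml ι M₀ c₀ χ ∧ x ∈ FmlSet ι A cA χ ∧
      ∀ (B : Type) [LinearOrder B] (cB : ι → Set B),
        Disjoint (FmlSet ι B cB χ) (FmlSet ι B cB ψ) := by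
  simp only [Set.disjoint_left]
  by_cases hbelow : x ∈ FmlSet ι A cA (belowFml ψ)
  · exact ⟨_, convexFml_belowFml, hbelow, fun B _ cB y hy hyψ =>
      lt_irrefl y (mem_fmlSet_belowFml.1 hy y hyψ)⟩
  · refine ⟨_, convexFml_aboveFml, mem_fmlSet_aboveFml.2 fun y hy => lt_of_not_ge fun hxy => ?_,
      fun B _ cB y hy hyψ => lt_irrefl y (mem_fmlSet_aboveFml.1 hy y hyψ)⟩
    refine hbelow (mem_fmlSet_belowFml.2 fun z hz => lt_of_not_ge fun hzx => ?_)
    exact hx ((hψ A _ cA hA).out hz hy ⟨hzx, hxy⟩)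

theorem IsConvexType.eq_of_subset {Ψ : Set ((CLOLang ι).Formula Unit)}
    (hΦ : IsConvexType ι M₀ c₀ Φ) (hΨ : IsConvexType ι M₀ c₀ Ψ) (h : Φ ⊆ Ψ) : Φ = Ψ := by
  obtain ⟨hconvex, ⟨B, _, cB, hB, b, hb⟩, -⟩ := hΨ
  exact h.antisymm fun ψ hψ => hΦ.2.2 ψ (hconvex ψ hψ)
    ⟨B, _, cB, hB, b, fun φ hφ => hb φ (insert_subset hψ h hφ)⟩

variable (c₀ cA) in
/-- The convex type of an element of a model of the theory of `(M₀, c₀)`: the set of convex formulas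
that it satisfies. -/
def convexTypeOf (x : A) : Set ((CLOLang ι).Formula Unit) :=
  {φ | ConvexFml ι M₀ c₀ φ ∧ x ∈ FmlSet ι A cA φ}

theorem isConvexType_convexTypeOf (hA : CLOEquiv ι A cA M₀ c₀) (x : A) :
    IsConvexType ι M₀ c₀ (convexTypeOf c₀ cA x) := by
  refine ⟨fun φ hφ => hφ.1, ⟨A, _, cA, hA, x, fun φ hφ => hφ.2⟩, ?_⟩
  rintro ψ hψ ⟨B, _, cB, -, b, hb⟩
  refine ⟨hψ, by_contra fun hx => ?_⟩
  obtain ⟨χ, hχ, hxχ, hdisj⟩ := hψ.exists_disjoint hA hx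
  exact Set.disjoint_left.1 (hdisj B cB) (hb χ (mem_insert_of_mem _ ⟨hχ, hxχ⟩))
    (hb ψ (mem_insert _ _))

theorem IsConvexType.mem_typeSet_iff (hΦ : IsConvexType ι M₀ c₀ Φ) (hA : CLOEquiv ι A cA M₀ c₀)
    {x : A} : x ∈ TypeSet ι A cA Φ ↔ convexTypeOf c₀ cA x = Φ := by
  refine ⟨fun hx => ?_, ?_⟩
  · exact (hΦ.eq_of_subset (isConvexType_convexTypeOf hA x) fun φ hφ => ⟨hΦ.1 φ hφ, hx φ hφ⟩).symm
  · rintro rfl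
    exact fun φ hφ => hφ.2

theorem lt_of_convexTypeOf_ne (hA : CLOEquiv ι A cA M₀ c₀) {x x' : A} {y y' : B}
    (hxy : convexTypeOf c₀ cA x = convexTypeOf c₀ cB y)
    (hxy' : convexTypeOf c₀ cA x' = convexTypeOf c₀ cB y')
    (hne : convexTypeOf c₀ cA x ≠ convexTypeOf c₀ cA x') (hlt : x < x') : y < y' := by
  obtain ⟨φ, hφ, hφx⟩ : ∃ φ ∈ convexTypeOf c₀ cA x', φ ∉ convexTypeOf c₀ cA x :=
    not_subset.1 fun h => hne <| Eq.symm <|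
      (isConvexType_convexTypeOf hA x').eq_of_subset (isConvexType_convexTypeOf hA x) h
  have hbelow : belowFml φ ∈ convexTypeOf c₀ cA x :=
    ⟨convexFml_belowFml, mem_fmlSet_belowFml.2 fun z hz => lt_of_not_ge fun hzx =>
      hφx ⟨hφ.1, (hφ.1 A _ cA hA).out hz hφ.2 ⟨hzx, hlt.le⟩⟩⟩
  exact mem_fmlSet_belowFml.1 (hxy.le hbelow).2 y' (hxy'.le hφ).2

theorem IsConvexType.isolatedCT (hΦ : IsConvexType ι M₀ c₀ Φ)
    (hfin : {Φ | IsConvexType ι M₀ c₀ Φ}.Finite) : IsolatedCT ι M₀ c₀ Φ := by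
  let I := {Ψ | IsConvexType ι M₀ c₀ Ψ ∧ Ψ ≠ Φ}
  have : Finite I := (hfin.subset fun Ψ h => h.1).to_subtype
  have separated (Ψ : I) : ∃ φ ∈ Φ, φ ∉ Ψ.1 :=
    not_subset.1 fun h => Ψ.2.2 (hΦ.eq_of_subset Ψ.2.1 h).symm
  choose f hf hf' using separated
  have convexFml_inf : ConvexFml ι M₀ c₀ (Formula.iInf f) := convexFml_iInf fun Ψ => hΦ.1 _ (hf Ψ)
  obtain ⟨B, _, cB, hB, b, hb⟩ := hΦ.2.1
  refine ⟨Formula.iInf f, ?_, convexFml_inf, fun Ψ hΨ hmem => by_contra fun hne => ?_⟩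
  · rw [← (hΦ.mem_typeSet_iff hB).1 hb]
    exact ⟨convexFml_inf, mem_fmlSet_iInf.2 fun Ψ => hb _ (hf Ψ)⟩
  · obtain ⟨C, _, cC, hC, x, hx⟩ := hΨ.2.1
    refine hf' ⟨Ψ, hΨ, hne⟩ (((hΨ.mem_typeSet_iff hC).1 hx).le ⟨hΦ.1 _ (hf _), ?_⟩)
    exact mem_fmlSet_iInf.1 (hx _ hmem) ⟨Ψ, hΨ, hne⟩

theorem IsolatedCT.exists_typeSet_eq_fmlSet (h : IsolatedCT ι M₀ c₀ Φ) :
    ∃ δ, ∀ (A : Type) [LinearOrder A] (cA : ι → Set A), CLOEquiv ι A cA M₀ c₀ →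
      TypeSet ι A cA Φ = FmlSet ι A cA δ := by
  obtain ⟨δ, hδ, hconvex, hisolate⟩ := h
  refine ⟨δ, fun A _ cA hA => Subset.antisymm (fun x hx => hx δ hδ) fun x hx => ?_⟩
  rw [← hisolate _ (isConvexType_convexTypeOf hA x) ⟨hconvex, hx⟩]
  exact fun φ hφ => hφ.2

theorem IsolatedCT.cloEquiv_typeSet (h : IsolatedCT ι M₀ c₀ Φ) (hA : CLOEquiv ι A cA M₀ c₀)
    (hB : CLOEquiv ι B cB M₀ c₀) :
    CLOEquiv ι (TypeSet ι A cA Φ) (subColor cA _) (TypeSet ι B cB Φ) (subColor cB _) := by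
  obtain ⟨δ, hδ⟩ := h.exists_typeSet_eq_fmlSet
  rw [hδ A cA hA, hδ B cB hB]
  exact CLOEquiv.fmlSet (Eq.trans hA (Eq.symm hB)) δ

theorem cloIso_of_fibers {I : Type*} {p : M → I} {q : N → I}
    (hlt : ∀ x x' y y', p x = q y → p x' = q y' → p x ≠ p x' → x < x' → y < y')
    (h : ∀ i, CLOIso ι (p ⁻¹' {i}) (subColor cM _) (q ⁻¹' {i}) (subColor cN _)) :
    CLOIso ι M cM N cN := by
  simp only [cloIso_iff] at h ⊢
  choose e he hcolor using h
  let g : M ≃ N := Equiv.ofFiberEquiv (f := p) (g := q) e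
  have hpg (x : M) : p x = q (g x) := (Equiv.ofFiberEquiv_map (f := p) (g := q) e x).symm
  have g_eq {x : M} {i : I} (hi : p x = i) : g x = e i ⟨x, hi⟩ := by
    subst hi
    rfl
  have hmono : StrictMono g := fun x x' hxx' => by
    by_cases hp : p x = p x'
    · rw [g_eq hp, g_eq rfl]
      exact (he (p x') ⟨x, hp⟩ ⟨x', rfl⟩).1 hxx'
    · exact hlt x x' _ _ (hpg x) (hpg x') hp hxx'
  exact ⟨g, fun x y => hmono.lt_iff_lt.symm, fun k x => hcolor (p x) k ⟨x, rfl⟩⟩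

theorem aleph0CatTheory_of_locallySimple (hLS : LocallySimple ι M₀ c₀)
    (hfin : {Φ | IsConvexType ι M₀ c₀ Φ}.Finite) : Aleph0CatTheory ι (CLOTheory ι M₀ c₀) := by
  intro A B _ _ cA cB _ _ (hA : CLOEquiv ι A cA M₀ c₀) (hB : CLOEquiv ι B cB M₀ c₀)
  obtain ⟨S, _, cS, hS, hsat⟩ := exists_suffSaturated c₀
  have cloIso_typeSet (Φ) (hΦ : IsConvexType ι M₀ c₀ Φ) :
      CLOIso ι (TypeSet ι A cA Φ) (subColor cA _) (TypeSet ι B cB Φ) (subColor cB _) :=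
    hLS S cS hS hsat Φ hΦ _ _ _ _ _ _ inferInstance inferInstance
      ((hΦ.isolatedCT hfin).cloEquiv_typeSet hA hS) ((hΦ.isolatedCT hfin).cloEquiv_typeSet hB hS)
  let I := {Φ // IsConvexType ι M₀ c₀ Φ}
  let p (x : A) : I := ⟨_, isConvexType_convexTypeOf hA x⟩
  let q (y : B) : I := ⟨_, isConvexType_convexTypeOf hB y⟩
  have fiber_p (i : I) : p ⁻¹' {i} = TypeSet ι A cA i :=
    Set.ext fun x => Subtype.ext_iff.trans (i.2.mem_typeSet_iff hA).symm
  have fiber_q (i : I) : q ⁻¹' {i} = TypeSet ι B cB i :=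
    Set.ext fun y => Subtype.ext_iff.trans (i.2.mem_typeSet_iff hB).symm
  refine cloIso_of_fibers (p := p) (q := q) (fun x x' y y' hxy hxy' hne => ?_) fun i => ?_
  · exact lt_of_convexTypeOf_ne hA (Subtype.ext_iff.1 hxy) (Subtype.ext_iff.1 hxy')
      (Subtype.coe_injective.ne hne)
  · rw [fiber_p, fiber_q]
    exact cloIso_typeSet i i.2

end ConvexTypes

section CountableClub

variable {X Y : Type*} {G : ∀ n, (Fin n → X) → Set X}

/-- `C` is closed under `G`, a set-valued operation on the tuples of elements of `X`. -/
def IsClosedUnder (G : ∀ n, (Fin n → X) → Set X) (C : Set X) : Prop :=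
  ∀ n (x : Fin n → X), (∀ i, x i ∈ C) → G n x ⊆ C

theorem exists_countable_isClosedUnder (hG : ∀ n x, (G n x).Countable) :
    ∃ C : Set X, C.Countable ∧ IsClosedUnder G C := by
  let D : ℕ → Set X := Nat.rec ∅ fun _ D => D ∪ ⋃ (n) (x : Fin n → D), G n fun i => x i
  have hmono : Monotone D := monotone_nat_of_le_succ fun k => subset_union_left
  refine ⟨⋃ k, D k, countable_iUnion fun k => ?_, fun n x hx => ?_⟩
  · induction k with
    | zero => exact countable_empty
    | succ k ih =>
      have := ih.to_subtype
      exact ih.union (countable_iUnion fun n => countable_iUnion fun x => hG n _)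
  · choose k hk using fun i => mem_iUnion.1 (hx i)
    have mem_sup (i : Fin n) : x i ∈ D (Finset.univ.sup k) :=
      hmono (Finset.le_sup (Finset.mem_univ i)) (hk i)
    refine Subset.trans ?_ (subset_iUnion D (Finset.univ.sup k + 1))
    exact fun y hy => Or.inr (mem_iUnion₂.2 ⟨n, fun i => ⟨x i, mem_sup i⟩, hy⟩)

variable (X) in
/-- The club filter on the countable subsets of `X`, generated by the sets of the countable `C`
that are closed under a given countable-valued operation on tuples. -/
def countableClub : Filter (Set X) where
  sets := {𝒮 | ∃ G : ∀ n, (Fin n → X) → Set X, (∀ n x, (G n x).Countable) ∧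
    ∀ C : Set X, C.Countable → IsClosedUnder G C → C ∈ 𝒮}
  univ_sets := ⟨fun _ _ => ∅, fun _ _ => countable_empty, fun _ _ _ => mem_univ _⟩
  sets_of_superset := fun ⟨G, hG, h⟩ hsub => ⟨G, hG, fun C hC hclosed => hsub (h C hC hclosed)⟩
  inter_sets := fun ⟨G, hG, h⟩ ⟨G', hG', h'⟩ =>
    ⟨fun n x => G n x ∪ G' n x, fun n x => (hG n x).union (hG' n x), fun C hC hclosed =>
      ⟨h C hC fun n x hx => subset_union_left.trans (hclosed n x hx),
        h' C hC fun n x hx => subset_union_right.trans (hclosed n x hx)⟩⟩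

namespace countableClub

open Filter

theorem eventually_iff {P : Set X → Prop} :
    (∀ᶠ C in countableClub X, P C) ↔ ∃ G : ∀ n, (Fin n → X) → Set X,
      (∀ n x, (G n x).Countable) ∧ ∀ C : Set X, C.Countable → IsClosedUnder G C → P C :=
  Iff.rfl

instance : (countableClub X).NeBot :=
  neBot_iff.2 fun h => by
    obtain ⟨G, hG, hfalse⟩ := eventually_iff.1 (empty_mem_iff_bot.2 h)
    obtain ⟨C, hC, hclosed⟩ := exists_countable_isClosedUnder hG
    exact hfalse C hC hclosed

theorem eventually_countable : ∀ᶠ C in countableClub X, C.Countable :=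
  eventually_iff.2 ⟨fun _ _ => ∅, fun _ _ => countable_empty, fun _ hC _ => hC⟩

theorem eventually_mem (x : X) : ∀ᶠ C in countableClub X, x ∈ C :=
  eventually_iff.2 ⟨fun _ _ => {x}, fun _ _ => countable_singleton x, fun _ _ hclosed =>
    hclosed 0 Fin.elim0 (fun i => i.elim0) rfl⟩

theorem tendsto_preimage {j : Y → X} (hj : Function.Injective j) :
    Tendsto (j ⁻¹' ·) (countableClub X) (countableClub Y) := by
  rintro 𝒮 ⟨G, hG, h⟩
  refine ⟨fun n x => ⋃ (y : Fin n → Y) (_ : j ∘ y = x), j '' G n y, fun n x => ?_,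
    fun C hC hclosed => h _ (hC.preimage hj) fun n y hy => ?_⟩
  · have hsub : {y : Fin n → Y | j ∘ y = x}.Subsingleton :=
      fun y hy y' hy' => hj.comp_left (hy.trans hy'.symm)
    exact hsub.countable.biUnion fun y _ => (hG n y).image j
  · exact fun z hz => hclosed n (j ∘ y) hy (mem_iUnion₂.2 ⟨y, rfl, z, hz, rfl⟩)

-- Normality of the club filter: it is closed under diagonal intersections.
theorem eventually_forall_mem {Q : X → Set X → Prop}
    (h : ∀ x, ∀ᶠ C in countableClub X, Q x C) :
    ∀ᶠ C in countableClub X, ∀ x ∈ C, Q x C := by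
  choose G hG hQ using fun x => eventually_iff.1 (h x)
  let diagonal : ∀ n, (Fin n → X) → Set X
    | 0, _ => ∅
    | n + 1, x => G (x 0) n (Fin.tail x)
  refine eventually_iff.2 ⟨diagonal, fun n x => ?_, fun C hC hclosed x hx => ?_⟩
  · cases n with
    | zero => exact countable_empty
    | succ n => exact hG _ _ _
  · exact hQ x C hC fun n y hy =>
      hclosed (n + 1) (Fin.cons x y : Fin (n + 1) → X) (Fin.forall_fin_succ.2 ⟨hx, hy⟩)

-- Fodor's lemma: a choice function on a stationary set is constant on a stationary subset.
theorem exists_frequently {j : Y → X} (hj : Function.Injective j) {Q : Y → Set X → Prop}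
    (h : ∃ᶠ C in countableClub X, ∃ y, j y ∈ C ∧ Q y C) :
    ∃ y, ∃ᶠ C in countableClub X, Q y C := by
  by_contra! hQ
  refine h ((eventually_forall_mem (Q := fun x C => ∀ y, j y = x → ¬ Q y C) fun x => ?_).mono
    fun C hC ⟨y, hy, hyQ⟩ => hC _ hy y rfl hyQ)
  by_cases hx : ∃ y, j y = x
  · obtain ⟨y, rfl⟩ := hx
    exact (hQ y).mono fun C hC y' hy' => hj hy' ▸ hC
  · exact .of_forall fun C y hy => absurd ⟨y, hy⟩ hx

theorem eventually_exists_realize {L : FirstOrder.Language.{u, v}} [Countable L.Symbols]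
    (M : Type w) [L.Structure M] :
    ∀ᶠ C : Set M in countableClub M,
      ∀ (n : ℕ) (φ : L.BoundedFormula Empty (n + 1)) (x : Fin n → C) (a : M),
      φ.Realize default (Fin.snoc ((↑) ∘ x) a : Fin (n + 1) → M) →
        ∃ b : C, φ.Realize default (Fin.snoc ((↑) ∘ x) (b : M) : Fin (n + 1) → M) := by
  have countable_boundedFormula (n : ℕ) : Countable (L.BoundedFormula Empty n) :=
    Function.Injective.countable (f := fun φ => (⟨n, φ⟩ : Σ n, L.BoundedFormula Empty n))
      sigma_mk_injective
  have exists_witnesses (n : ℕ) (φ : L.BoundedFormula Empty (n + 1)) (x : Fin n → M) :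
      ∃ W : Set M, W.Countable ∧ ∀ a, φ.Realize default (Fin.snoc x a : Fin (n + 1) → M) →
        ∃ b ∈ W, φ.Realize default (Fin.snoc x b : Fin (n + 1) → M) := by
    by_cases h : ∃ b, φ.Realize default (Fin.snoc x b : Fin (n + 1) → M)
    · obtain ⟨b, hb⟩ := h
      exact ⟨{b}, countable_singleton b, fun _ _ => ⟨b, rfl, hb⟩⟩
    · exact ⟨∅, countable_empty, fun a ha => absurd ⟨a, ha⟩ h⟩
  choose W hW hrealize using exists_witnesses
  refine eventually_iff.2 ⟨fun n x => ⋃ φ, W n φ x, fun n x => countable_iUnion fun φ => hW n φ x,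
    fun C _ hclosed n φ x a ha => ?_⟩
  obtain ⟨b, hb, hφ⟩ := hrealize n φ _ a ha
  exact ⟨⟨b, hclosed n _ (fun i => (x i).2) (mem_iUnion.2 ⟨φ, hb⟩)⟩, hφ⟩

end countableClub

end CountableClub

section BackAndForth

open Filter

instance [Countable ι] : Countable (CLOLang ι).Symbols := by
  have (n : ℕ) : Countable ((CLOLang ι).Functions n) := inferInstanceAs (Countable Empty)
  have (n : ℕ) : Countable ((CLOLang ι).Relations n) := by
    let code : CLORel ι n → Option ι
      | .lt => none
      | .color k => some k
    refine Function.Injective.countable (f := code) fun R R' h => ?_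
    cases R <;> cases R' <;> cases h <;> rfl
  exact inferInstanceAs (Countable ((Σ n, (CLOLang ι).Functions n) ⊕ Σ n, (CLOLang ι).Relations n))

theorem countableClub.eventually_cloEquiv [Countable ι] (c : ι → Set M) :
    ∀ᶠ C : Set M in countableClub M, CLOEquiv ι C (subColor c C) M c := by
  let := CLOStr ι M c
  filter_upwards [eventually_exists_realize (L := CLOLang ι) M] with C hC
  let := CLOStr ι C (subColor c C)
  exact ((subtypeEmbedding c C).toElementaryEmbedding hC).elementarilyEquivalent

variable {A B : Type} [LinearOrder A] [LinearOrder B] {cA : ι → Set A} {cB : ι → Set B}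
  {f : Finset (A × B)} {C : Set (A ⊕ B)}

variable (cA cB) in
/-- The finite set of pairs `f` is contained in the graph of an isomorphism between the two halves
of `C`. -/
def ExtendsToIso (f : Finset (A × B)) (C : Set (A ⊕ B)) : Prop :=
  ∃ g : ↥(Sum.inl ⁻¹' C : Set A) ≃ ↥(Sum.inr ⁻¹' C : Set B),
    (∀ x y, x < y ↔ g x < g y) ∧ (∀ k x, x.1 ∈ cA k ↔ (g x).1 ∈ cB k) ∧
      ∀ p ∈ f, ∃ x, (x.1, (g x).1) = p

namespace ExtendsToIso

theorem isPartialIso (h : ExtendsToIso cA cB f C) : IsPartialIso ι cA cB f := by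
  obtain ⟨g, hlt, hcolor, hf⟩ := h
  intro p hp q hq
  obtain ⟨x, rfl⟩ := hf p hp
  obtain ⟨y, rfl⟩ := hf q hq
  exact ⟨hlt x y, by simp only [← Subtype.ext_iff, g.apply_eq_iff_eq], fun k => hcolor k x⟩

theorem exists_insert_left (h : ExtendsToIso cA cB f C) {a : A} (ha : Sum.inl a ∈ C) :
    ∃ b, Sum.inr b ∈ C ∧ ExtendsToIso cA cB (insert (a, b) f) C := by
  obtain ⟨g, hlt, hcolor, hf⟩ := h
  exact ⟨g ⟨a, ha⟩, (g ⟨a, ha⟩).2, g, hlt, hcolor,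
    Finset.forall_mem_insert _ _ _ |>.2 ⟨⟨⟨a, ha⟩, rfl⟩, hf⟩⟩

theorem exists_insert_right (h : ExtendsToIso cA cB f C) {b : B} (hb : Sum.inr b ∈ C) :
    ∃ a, Sum.inl a ∈ C ∧ ExtendsToIso cA cB (insert (a, b) f) C := by
  obtain ⟨g, hlt, hcolor, hf⟩ := h
  exact ⟨g.symm ⟨b, hb⟩, (g.symm ⟨b, hb⟩).2, g, hlt, hcolor,
    Finset.forall_mem_insert _ _ _ |>.2 ⟨⟨g.symm ⟨b, hb⟩, by simp⟩, hf⟩⟩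

end ExtendsToIso

theorem Aleph0CatTheory.eventually_extendsToIso_empty [Countable ι] {T : (CLOLang ι).Theory}
    (hT : Aleph0CatTheory ι T) (hA : CLOTheory ι A cA = T) (hB : CLOTheory ι B cB = T) :
    ∀ᶠ C in countableClub (A ⊕ B), ExtendsToIso cA cB ∅ C := by
  have hleft := countableClub.tendsto_preimage (X := A ⊕ B) Sum.inl_injective
  have hright := countableClub.tendsto_preimage (X := A ⊕ B) Sum.inr_injective
  filter_upwards [hleft.eventually countableClub.eventually_countable,
    hright.eventually countableClub.eventually_countable,
    hleft.eventually (countableClub.eventually_cloEquiv cA),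
    hright.eventually (countableClub.eventually_cloEquiv cB)] with C hC hC' hCA hCB
  obtain ⟨g, hlt, hcolor⟩ := cloIso_iff.1 <|
    hT _ _ _ _ _ _ hC.to_subtype hC'.to_subtype (Eq.trans hCA hA) (Eq.trans hCB hB)
  exact ⟨g, hlt, hcolor, by simp⟩

theorem Aleph0CatTheory.backForthEquiv [Countable ι] {T : (CLOLang ι).Theory}
    (hT : Aleph0CatTheory ι T) (hA : CLOTheory ι A cA = T) (hB : CLOTheory ι B cB = T) :
    BackForthEquiv ι A cA B cB := by
  refine ⟨{f | ∃ᶠ C in countableClub (A ⊕ B), ExtendsToIso cA cB f C},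
    ⟨∅, (hT.eventually_extendsToIso_empty hA hB).frequently⟩, fun f hf => ?_,
    fun f hf a => ?_, fun f hf b => ?_⟩
  · obtain ⟨C, hC⟩ := hf.exists
    exact hC.isPartialIso
  · obtain ⟨b, hb⟩ := countableClub.exists_frequently Sum.inr_injective <|
      (hf.and_eventually (countableClub.eventually_mem (Sum.inl a))).mono
        fun C ⟨hC, ha⟩ => hC.exists_insert_left ha
    exact ⟨_, hb, Finset.subset_insert _ _, b, Finset.mem_insert_self _ _⟩
  · obtain ⟨a, ha⟩ := countableClub.exists_frequently Sum.inl_injective <|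
      (hf.and_eventually (countableClub.eventually_mem (Sum.inr b))).mono
        fun C ⟨hC, hb⟩ => hC.exists_insert_right hb
    exact ⟨_, ha, Finset.subset_insert _ _, a, Finset.mem_insert_self _ _⟩

end BackAndForth

end ColoredOrders

theorem stmt15 {ι : Type} [Countable ι] {M₀ : Type} [LinearOrder M₀] (c₀ : ι → Set M₀)
    (hLS : LocallySimple ι M₀ c₀)
    (hfin : {Φ | IsConvexType ι M₀ c₀ Φ}.Finite) :
    Aleph0CatTheory ι (CLOTheory ι M₀ c₀) ∧
      ∀ (A : Type) [LinearOrder A], ∀ cA : ι → Set A,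
        ∀ (B : Type) [LinearOrder B], ∀ cB : ι → Set B,
          CLOEquiv ι A cA M₀ c₀ → CLOEquiv ι B cB M₀ c₀ →
            BackForthEquiv ι A cA B cB := by
  have hcat := aleph0CatTheory_of_locallySimple hLS hfin
  exact ⟨hcat, fun A _ cA B _ cB hA hB => hcat.backForthEquiv hA hB⟩
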